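/- Let p ≥ 7 be an odd integer, set d = (p−1)/p, and let c > b₀/d. Let u : [0,1] → ℝ be continuous, real-analytic at ρ = 0 with u(0) = c and u'(0) = 0, and satisfy the self-similar profile equation (1−ρ²)u''(ρ) + (2/ρ − (2+2α)ρ)u'(ρ) − α(α+1)u(ρ) + u(ρ)^p = 0 for all ρ ∈ (0,1). Then there exists ρ₁ with 0 < ρ₁ < (b∞/(d c))^{1/α} such that w(ρ₁) = 0 and 0 < ρ₁ · w'(ρ₁) < α, where w(ρ) = u(ρ)/(b∞ ρ^{−α}) − 1. -/

import Mathlib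

open Set Real Filter

/-- The exponent `α = 2/(p-1)`. -/
noncomputable def alphaP (p : ℕ) : ℝ := 2 / ((p : ℝ) - 1)

/-- `b₀ = (2(p+1)/(p-1)²)^(1/(p-1))`, the constant solution. -/
noncomputable def bZero (p : ℕ) : ℝ :=
  (2 * ((p : ℝ) + 1) / ((p : ℝ) - 1) ^ 2) ^ ((1 : ℝ) / ((p : ℝ) - 1))

/-- `b∞ = (2(p-3)/(p-1)²)^(1/(p-1))`. -/
noncomputable def bInfty (p : ℕ) : ℝ :=
  (2 * ((p : ℝ) - 3) / ((p : ℝ) - 1) ^ 2) ^ ((1 : ℝ) / ((p : ℝ) - 1))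

/-- The singular static solution `u∞(ρ) = b∞ ρ^(-α)`. -/
noncomputable def uInfty (p : ℕ) (ρ : ℝ) : ℝ := bInfty p * ρ ^ (-(alphaP p))

/-- The self-similar profile equation
`(1-ρ²)u'' + (2/ρ - (2+2α)ρ)u' - α(α+1)u + u^p = 0` at the point `ρ`. -/
def ProfileEq (p : ℕ) (u : ℝ → ℝ) (ρ : ℝ) : Prop :=
  (1 - ρ ^ 2) * deriv (deriv u) ρ + (2 / ρ - (2 + 2 * alphaP p) * ρ) * deriv u ρ
    - alphaP p * (alphaP p + 1) * u ρ + u ρ ^ p = 0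

open Topology

/-!
Write `c = u 0` and `e = (p - 1) / p * c`. Up to the radius `R` at which the singular solution
equals `e`, the profile stays above `e`: the nonlinearity lies below its chord over `[e, c]`, and
Sturm comparison of the linearised flux with a parabola that falls from `c` at `0` to `e` at `R`
keeps `u` above that parabola. Hence `u` exceeds the singular solution at `R` and crosses it
somewhere before. A second Sturm comparison, now of `u` with the singular power itself, makes the
Wronskian positive at the first crossing, which is `0 < ρ w'`; as `u` is decreasing there,
`ρ w' = α + ρ u' / u < α`.

The equation is given in terms of `deriv`, so it has to be shown first that `u` is twice
differentiable. Where `u'` is not differentiable the junk value `u'' = 0` makes the equation an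
algebraic formula for `u'`; since a derivative has the Darboux property, `u'` inherits the
regularity of that formula, and the first integral of the equation is Lipschitz with vanishing
derivative.
-/

section Contact

-- In this section `h` is a derivative that is stationary wherever it differs from `γ`.

variable {U h γ : ℝ → ℝ} {x y : ℝ}

theorem eq_of_hasDerivAt_of_eqOn_Ico {κ : ℝ} (hxy : x < y)
    (hU : ∀ t ∈ Icc x y, HasDerivAt U (h t) t) (hκ : ∀ t ∈ Ico x y, h t = κ) : h y = κ := by
  have hlim : Tendsto (deriv U) (𝓝[<] y) (𝓝 κ) := by
    refine tendsto_const_nhds.congr' ?_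
    filter_upwards [Ico_mem_nhdsLT hxy] with t ht
    rw [(hU t (Ico_subset_Icc_self ht)).deriv, hκ t ht]
  have hUy := hU y (right_mem_Icc.2 hxy.le)
  exact (uniqueDiffWithinAt_Iic y).eq_deriv _ hUy.hasDerivWithinAt
    (hasDerivWithinAt_Iic_of_tendsto_deriv
      (fun t ht ↦ (hU t (Ico_subset_Icc_self ht)).differentiableAt.differentiableWithinAt)
      hUy.continuousAt.continuousWithinAt (Ico_mem_nhdsLT hxy) hlim)

theorem eq_of_hasDerivAt_zero_of_mem_Icc (hh : ∀ t ∈ Icc x y, HasDerivAt h 0 t) (hxy : x ≤ y) :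
    h y = h x :=
  constant_of_has_deriv_right_zero (fun t ht ↦ (hh t ht).continuousAt.continuousWithinAt)
    (fun t ht ↦ (hh t (Ico_subset_Icc_self ht)).hasDerivWithinAt) y (right_mem_Icc.2 hxy)

theorem exists_isLeast_contact (hh : ∀ t ∈ Icc x y, h t ≠ γ t → HasDerivAt h 0 t)
    (hγ : ContinuousOn γ (Icc x y)) (hne : ∃ t ∈ Icc x y, h t = γ t) :
    ∃ z, IsLeast {t ∈ Icc x y | h t = γ t} z := by
  set Z := {t ∈ Icc x y | h t = γ t}
  have hZ : Z.Nonempty := hne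
  have hZbdd : BddBelow Z := ⟨x, fun t ht ↦ ht.1.1⟩
  have hcl : sInf Z ∈ closure Z := csInf_mem_closure hZ hZbdd
  have hIcc : sInf Z ∈ Icc x y := closure_minimal (fun t ht ↦ ht.1) isClosed_Icc hcl
  refine ⟨sInf Z, ⟨hIcc, ?_⟩, fun t ht ↦ csInf_le hZbdd ht⟩
  by_contra hoff
  have : (𝓝[Z] sInf Z).NeBot := mem_closure_iff_nhdsWithin_neBot.1 hcl
  have hlim : Tendsto h (𝓝[Z] sInf Z) (𝓝 (γ (sInf Z))) :=
    ((hγ _ hIcc).mono fun t ht ↦ ht.1).congr' <| by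
      filter_upwards [self_mem_nhdsWithin] with t ht using ht.2.symm
  exact hoff (tendsto_nhds_unique (hh _ hIcc hoff).continuousAt.continuousWithinAt hlim)

theorem eq_or_left_mem_image_of_contact (hxy : x ≤ y)
    (hU : ∀ t ∈ Icc x y, HasDerivAt U (h t) t)
    (hh : ∀ t ∈ Icc x y, h t ≠ γ t → HasDerivAt h 0 t) (hγ : ContinuousOn γ (Icc x y)) :
    h x = h y ∨ h x ∈ γ '' Icc x y := by
  by_cases hne : ∃ t ∈ Icc x y, h t = γ t
  · right
    obtain ⟨z, ⟨hz, hzγ⟩, hmin⟩ := exists_isLeast_contact hh hγ hne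
    refine ⟨z, hz, hzγ.symm.trans ?_⟩
    rcases hz.1.eq_or_lt with rfl | hxz
    · rfl
    refine eq_of_hasDerivAt_of_eqOn_Ico hxz (fun t ht ↦ hU t ⟨ht.1, ht.2.trans hz.2⟩) fun t ht ↦ ?_
    refine eq_of_hasDerivAt_zero_of_mem_Icc (fun w hw ↦ ?_) ht.1
    have hwz : w < z := hw.2.trans_lt ht.2
    have hwI : w ∈ Icc x y := ⟨hw.1, hwz.le.trans hz.2⟩
    exact hh w hwI fun hwγ ↦ (hmin ⟨hwI, hwγ⟩).not_gt hwz
  · push Not at hne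
    exact .inl (eq_of_hasDerivAt_zero_of_mem_Icc (fun t ht ↦ hh t ht (hne t ht)) hxy).symm

theorem eq_or_right_mem_image_of_contact (hxy : x ≤ y)
    (hU : ∀ t ∈ Icc x y, HasDerivAt U (h t) t)
    (hh : ∀ t ∈ Icc x y, h t ≠ γ t → HasDerivAt h 0 t) (hγ : ContinuousOn γ (Icc x y)) :
    h y = h x ∨ h y ∈ γ '' Icc x y := by
  have hneg : ∀ t ∈ Icc (-y) (-x), -t ∈ Icc x y := fun t ht ↦
    ⟨le_neg.2 ht.2, neg_le.2 ht.1⟩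
  have hrefl := eq_or_left_mem_image_of_contact (U := fun t ↦ -U (-t)) (h := fun t ↦ h (-t))
    (γ := fun t ↦ γ (-t)) (neg_le_neg hxy)
    (fun t ht ↦ ((hU _ (hneg t ht)).scomp t (hasDerivAt_neg t)).neg.congr_deriv (by simp))
    (fun t ht hoff ↦ 
      ((hh _ (hneg t ht) hoff).scomp t (hasDerivAt_neg t)).congr_deriv (by simp))
    (hγ.comp continuousOn_neg hneg)
  simp only [neg_neg] at hrefl
  exact hrefl.imp_right fun ⟨z, hz, hzγ⟩ ↦ ⟨-z, hneg z hz, hzγ⟩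

variable {s : Set ℝ}

theorem eq_or_mem_image_uIcc_of_contact (hs : s.OrdConnected)
    (hU : ∀ t ∈ s, HasDerivAt U (h t) t)
    (hh : ∀ t ∈ s, h t ≠ γ t → HasDerivAt h 0 t) (hγ : ContinuousOn γ s) (hx : x ∈ s)
    (hy : y ∈ s) : h x = h y ∨ h x ∈ γ '' uIcc x y := by
  rcases le_total x y with hxy | hyx
  · have hsub : Icc x y ⊆ s := hs.out hx hy
    rw [uIcc_of_le hxy]
    exact eq_or_left_mem_image_of_contact hxy (fun t ht ↦ hU t (hsub ht))
      (fun t ht ↦ hh t (hsub ht)) (hγ.mono hsub)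
  · have hsub : Icc y x ⊆ s := hs.out hy hx
    rw [uIcc_of_ge hyx]
    exact eq_or_right_mem_image_of_contact hyx (fun t ht ↦ hU t (hsub ht))
      (fun t ht ↦ hh t (hsub ht)) (hγ.mono hsub)

theorem continuousOn_of_contact (hs : s.OrdConnected)
    (hU : ∀ t ∈ s, HasDerivAt U (h t) t)
    (hh : ∀ t ∈ s, h t ≠ γ t → HasDerivAt h 0 t) (hγ : ContinuousOn γ s) :
    ContinuousOn h s := by
  intro x hx
  by_cases hcontact : h x = γ x
  · refine Metric.continuousWithinAt_iff.2 fun ε hε ↦ ?_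
    obtain ⟨δ, hδ, hγδ⟩ := Metric.continuousWithinAt_iff.1 (hγ x hx) ε hε
    refine ⟨δ, hδ, fun y hy hyx ↦ ?_⟩
    rcases eq_or_mem_image_uIcc_of_contact hs hU hh hγ hy hx with heq | ⟨z, hz, hzγ⟩
    · rwa [heq, dist_self]
    · rw [← hzγ, hcontact]
      exact hγδ (hs.uIcc_subset hy hx hz)
        ((Real.dist_le_of_mem_uIcc hz right_mem_uIcc).trans_lt hyx)
  · exact (hh x hx hcontact).continuousAt.continuousWithinAt

theorem lipschitzOnWith_of_contact {K : NNReal} (hs : s.OrdConnected)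
    (hU : ∀ t ∈ s, HasDerivAt U (h t) t)
    (hh : ∀ t ∈ s, h t ≠ γ t → HasDerivAt h 0 t) (hγ : LipschitzOnWith K γ s) :
    LipschitzOnWith K h s := by
  refine LipschitzOnWith.of_dist_le_mul fun x hx y hy ↦ ?_
  rcases eq_or_mem_image_uIcc_of_contact hs hU hh hγ.continuousOn hx hy with heq | ⟨z, hz, hzγ⟩
  · rw [heq, dist_self]; positivity
  rcases eq_or_mem_image_uIcc_of_contact hs hU hh hγ.continuousOn hy hx with heq | ⟨w, hw, hwγ⟩
  · rw [heq, dist_self]; positivity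
  rw [uIcc_comm] at hw
  have hsub : uIcc x y ⊆ s := hs.uIcc_subset hx hy
  calc dist (h x) (h y) = dist (γ z) (γ w) := by rw [hzγ, hwγ]
    _ ≤ K * dist z w := hγ.dist_le_mul z (hsub hz) w (hsub hw)
    _ ≤ K * dist x y := by gcongr; exact Real.dist_le_of_mem_uIcc hz hw

end Contact

theorem eq_of_lipschitzOnWith_of_deriv_eq_zero {h : ℝ → ℝ} {K : NNReal} {x y : ℝ}
    (hh : LipschitzOnWith K h (uIcc x y)) (hderiv : ∀ t ∈ uIcc x y, deriv h t = 0) :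
    h x = h y := by
  have hint : ∫ t in x..y, deriv h t = 0 := by
    rw [intervalIntegral.integral_congr (g := fun _ ↦ (0 : ℝ)) hderiv,
      intervalIntegral.integral_zero]
  linarith [hh.absolutelyContinuousOnInterval.integral_deriv_eq_sub]

section Regularity

variable {u β φ : ℝ → ℝ} {a b : ℝ}

theorem differentiableAt_of_deriv_deriv_ne_zero {x : ℝ} (hu : ContinuousAt u x)
    (hderiv : deriv (deriv u) x ≠ 0) : DifferentiableAt ℝ u x := by
  by_contra hnd
  have hux : deriv u x = 0 := deriv_zero_of_not_differentiableAt hnd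
  have hu' := (differentiableAt_of_deriv_ne_zero hderiv).hasDerivAt
  have hne : ∀ᶠ z in 𝓝[≠] x, deriv u z ≠ 0 := hu'.eventually_ne hderiv
  have hlim : Tendsto (deriv u) (𝓝 x) (𝓝 0) := hux ▸ hu'.continuousAt.tendsto
  have hdiff : DifferentiableOn ℝ u {z | deriv u z ≠ 0} := fun z hz ↦
    (differentiableAt_of_deriv_ne_zero hz).differentiableWithinAt
  have hleft : HasDerivWithinAt u 0 (Iic x) x :=
    hasDerivWithinAt_Iic_of_tendsto_deriv hdiff hu.continuousWithinAt
      (nhdsWithin_mono x (fun _ hy ↦ ne_of_lt hy) hne) (hlim.mono_left nhdsWithin_le_nhds)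
  have hright : HasDerivWithinAt u 0 (Ici x) x :=
    hasDerivWithinAt_Ici_of_tendsto_deriv hdiff hu.continuousWithinAt
      (nhdsWithin_mono x (fun _ hy ↦ ne_of_gt hy) hne) (hlim.mono_left nhdsWithin_le_nhds)
  have hboth := hleft.union hright
  rw [Iic_union_Ici, hasDerivWithinAt_univ] at hboth
  exact hnd hboth.differentiableAt

theorem exists_hasDerivAt_of_continuousOn_Ioo {f : ℝ → ℝ} (hf : ContinuousOn f (Ioo a b)) :
    ∃ G : ℝ → ℝ, ∀ x ∈ Ioo a b, HasDerivAt G (f x) x := by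
  refine ⟨fun x ↦ ∫ t in ((a + b) / 2)..x, f t, fun x hx ↦ ?_⟩
  have hmid : (a + b) / 2 ∈ Ioo a b := by
    constructor <;> linarith [hx.1, hx.2]
  exact intervalIntegral.integral_hasDerivAt_right
    (hf.mono (ordConnected_Ioo.uIcc_subset hmid hx)).intervalIntegrable
    (hf.stronglyMeasurableAtFilter isOpen_Ioo x hx) (hf.continuousAt (isOpen_Ioo.mem_nhds hx))

theorem exists_hasDerivAt_mul_deriv_add (hβ : ContDiffOn ℝ 1 β (Ioo a b))
    (hφ : ContinuousOn φ (Ioo a b)) (hu : ∀ x ∈ Ioo a b, DifferentiableAt ℝ u x) :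
    ∃ G : ℝ → ℝ, ∀ x ∈ Ioo a b, HasDerivAt G (β x * deriv u x + φ x) x := by
  have hu_cont : ContinuousOn u (Ioo a b) := fun x hx ↦ (hu x hx).continuousAt.continuousWithinAt
  obtain ⟨Q, hQ⟩ := exists_hasDerivAt_of_continuousOn_Ioo
    (hφ.sub ((hβ.continuousOn_deriv_of_isOpen isOpen_Ioo le_rfl).mul hu_cont))
  refine ⟨fun x ↦ β x * u x + Q x, fun x hx ↦ ?_⟩
  have hβx := ((hβ.differentiableOn one_ne_zero).differentiableAt (isOpen_Ioo.mem_nhds hx))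
  exact ((hβx.hasDerivAt.mul (hu x hx).hasDerivAt).add (hQ x hx)).congr_deriv
    (by simp only [Pi.sub_apply, Pi.mul_apply]; ring)

section FirstIntegral

variable {G : ℝ → ℝ} {x : ℝ}

theorem hasDerivAt_deriv_add_of_differentiableAt
    (hG : HasDerivAt G (β x * deriv u x + φ x) x)
    (heq : deriv (deriv u) x + β x * deriv u x + φ x = 0) (hu : DifferentiableAt ℝ (deriv u) x) :
    HasDerivAt (fun t ↦ deriv u t + G t) 0 x :=
  (hu.hasDerivAt.add hG).congr_deriv (by linarith)

theorem hasDerivAt_deriv_add_of_ne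
    (hG : HasDerivAt G (β x * deriv u x + φ x) x) (hβ : β x ≠ 0)
    (heq : deriv (deriv u) x + β x * deriv u x + φ x = 0)
    (hne : deriv u x + G x ≠ G x - φ x / β x) :
    HasDerivAt (fun t ↦ deriv u t + G t) 0 x := by
  refine hasDerivAt_deriv_add_of_differentiableAt hG heq ?_
  contrapose! hne
  rw [deriv_zero_of_not_differentiableAt hne] at heq
  field_simp
  linarith

theorem deriv_deriv_add_eq_zero
    (hG : HasDerivAt G (β x * deriv u x + φ x) x)
    (heq : deriv (deriv u) x + β x * deriv u x + φ x = 0) :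
    deriv (fun t ↦ deriv u t + G t) x = 0 := by
  by_cases hu : DifferentiableAt ℝ (deriv u) x
  · exact (hasDerivAt_deriv_add_of_differentiableAt hG heq hu).deriv
  · refine deriv_zero_of_not_differentiableAt fun hsum ↦ hu ?_
    simpa [Pi.sub_def] using hsum.sub hG.differentiableAt

end FirstIntegral

theorem exists_hasDerivAt_deriv_add {G : ℝ → ℝ} (hu : ∀ x ∈ Ioo a b, DifferentiableAt ℝ u x)
    (hG : ContinuousOn G (Ioo a b)) :
    ∃ U : ℝ → ℝ, ∀ x ∈ Ioo a b, HasDerivAt U (deriv u x + G x) x := by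
  obtain ⟨Q, hQ⟩ := exists_hasDerivAt_of_continuousOn_Ioo hG
  exact ⟨fun x ↦ u x + Q x, fun x hx ↦ (hu x hx).hasDerivAt.add (hQ x hx)⟩

theorem continuousOn_deriv_of_deriv_deriv_add_eq_zero (hβ : ContDiffOn ℝ 1 β (Ioo a b))
    (hβ0 : ∀ x ∈ Ioo a b, β x ≠ 0) (hφ : ContinuousOn φ (Ioo a b))
    (hu : ∀ x ∈ Ioo a b, DifferentiableAt ℝ u x)
    (heq : ∀ x ∈ Ioo a b, deriv (deriv u) x + β x * deriv u x + φ x = 0) :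
    ContinuousOn (deriv u) (Ioo a b) := by
  obtain ⟨G, hG⟩ := exists_hasDerivAt_mul_deriv_add hβ hφ hu
  have hG_cont : ContinuousOn G (Ioo a b) := fun x hx ↦ (hG x hx).continuousAt.continuousWithinAt
  obtain ⟨U, hU⟩ := exists_hasDerivAt_deriv_add hu hG_cont
  have hsum : ContinuousOn (fun x ↦ deriv u x + G x) (Ioo a b) :=
    continuousOn_of_contact ordConnected_Ioo hU
      (fun x hx ↦ hasDerivAt_deriv_add_of_ne (hG x hx) (hβ0 x hx) (heq x hx))
      (hG_cont.sub (hφ.div hβ.continuousOn hβ0))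
  simpa [Pi.sub_def] using hsum.sub hG_cont

theorem contDiffOn_one_of_continuousOn_deriv {f : ℝ → ℝ} {s : Set ℝ} (hs : IsOpen s)
    (hf : ∀ x ∈ s, DifferentiableAt ℝ f x) (hderiv : ContinuousOn (deriv f) s) :
    ContDiffOn ℝ 1 f s :=
  (contDiffOn_one_iff_derivWithin hs.uniqueDiffOn).2
    ⟨fun x hx ↦ (hf x hx).differentiableWithinAt,
      hderiv.congr fun _ hx ↦ derivWithin_of_isOpen hs hx⟩

theorem differentiableAt_deriv_of_deriv_deriv_add_eq_zero (hβ : ContDiffOn ℝ 1 β (Ioo a b))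
    (hβ0 : ∀ x ∈ Ioo a b, β x ≠ 0) (hφ : ContDiffOn ℝ 1 φ (Ioo a b))
    (hu : ∀ x ∈ Ioo a b, DifferentiableAt ℝ u x)
    (heq : ∀ x ∈ Ioo a b, deriv (deriv u) x + β x * deriv u x + φ x = 0) :
    ∀ x ∈ Ioo a b, DifferentiableAt ℝ (deriv u) x := by
  intro x hx
  obtain ⟨G, hG⟩ := exists_hasDerivAt_mul_deriv_add hβ hφ.continuousOn hu
  have hu_cont := continuousOn_deriv_of_deriv_deriv_add_eq_zero hβ hβ0 hφ.continuousOn hu heq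
  have hG1 : ContDiffOn ℝ 1 G (Ioo a b) :=
    contDiffOn_one_of_continuousOn_deriv isOpen_Ioo (fun t ht ↦ (hG t ht).differentiableAt)
      (((hβ.continuousOn.mul hu_cont).add hφ.continuousOn).congr fun t ht ↦ (hG t ht).deriv)
  obtain ⟨U, hU⟩ := exists_hasDerivAt_deriv_add hu hG1.continuousOn
  have hconst : ∀ y ∈ Ioo a b, deriv u y + G y = deriv u x + G x := by
    intro y hy
    have hsub : uIcc y x ⊆ Ioo a b := ordConnected_Ioo.uIcc_subset hy hx
    obtain ⟨K, hK⟩ := ((hG1.sub (hφ.div hβ hβ0)).mono hsub).exists_lipschitzOnWith one_ne_zero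
      (convex_uIcc y x) isCompact_uIcc
    exact eq_of_lipschitzOnWith_of_deriv_eq_zero
      (lipschitzOnWith_of_contact ordConnected_uIcc (fun t ht ↦ hU t (hsub ht))
        (fun t ht ↦ hasDerivAt_deriv_add_of_ne (hG t (hsub ht)) (hβ0 t (hsub ht))
          (heq t (hsub ht))) hK)
      (fun t ht ↦ deriv_deriv_add_eq_zero (hG t (hsub ht)) (heq t (hsub ht)))
  refine ((hG x hx).differentiableAt.const_sub (deriv u x + G x)).congr_of_eventuallyEq ?_
  filter_upwards [isOpen_Ioo.mem_nhds hx] with y hy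
  linarith [hconst y hy]

end Regularity

section Comparison

variable {l r : ℝ}

theorem pos_of_tendsto_zero_of_deriv_pos {N N' : ℝ → ℝ} (hlr : l < r)
    (hN : ∀ x ∈ Ioc l r, HasDerivAt N (N' x) x) (hN' : ∀ x ∈ Ioo l r, 0 < N' x)
    (hlim : Tendsto N (𝓝[>] l) (𝓝 0)) : 0 < N r := by
  have hmono : StrictMonoOn N (Ioc l r) := by
    refine strictMonoOn_of_deriv_pos (convex_Ioc l r)
      (fun x hx ↦ (hN x hx).continuousAt.continuousWithinAt) fun x hx ↦ ?_
    rw [interior_Ioc] at hx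
    exact (hN x (Ioo_subset_Ioc_self hx)).deriv ▸ hN' x hx
  obtain ⟨m, hlm, hmr⟩ := exists_between hlr
  have hm : 0 ≤ N m := by
    refine le_of_tendsto hlim ?_
    filter_upwards [Ioo_mem_nhdsGT hlm] with x hx
    exact (hmono ⟨hx.1, (hx.2.trans hmr).le⟩ ⟨hlm, hmr.le⟩ hx.2).le
  exact hm.trans_lt (hmono ⟨hlm, hmr.le⟩ ⟨hlr, le_rfl⟩ hmr)

theorem wronskian_pos {W Z Z' Ψ Ψ' f g : ℝ → ℝ} (hlr : l < r)
    (hZ : ∀ x ∈ Ioc l r, HasDerivAt Z (Z' x) x) (hΨ : ∀ x ∈ Ioc l r, HasDerivAt Ψ (Ψ' x) x)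
    (hWZ : ∀ x ∈ Ioc l r, HasDerivAt (fun t ↦ W t * Z' t) (-f x) x)
    (hWΨ : ∀ x ∈ Ioc l r, HasDerivAt (fun t ↦ W t * Ψ' t) (-g x) x)
    (hlt : ∀ x ∈ Ioo l r, f x * Ψ x < Z x * g x)
    (hlim : Tendsto (fun x ↦ W x * Z' x * Ψ x - Z x * (W x * Ψ' x)) (𝓝[>] l) (𝓝 0))
    (hW : 0 < W r) : 0 < Z' r * Ψ r - Z r * Ψ' r := by
  have hN : 0 < W r * Z' r * Ψ r - Z r * (W r * Ψ' r) :=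
    pos_of_tendsto_zero_of_deriv_pos (N := fun x ↦ W x * Z' x * Ψ x - Z x * (W x * Ψ' x))
      (N' := fun x ↦ Z x * g x - f x * Ψ x) hlr
      (fun x hx ↦ (((hWZ x hx).mul (hΨ x hx)).sub ((hZ x hx).mul (hWΨ x hx))).congr_deriv (by ring))
      (fun x hx ↦ sub_pos.2 (hlt x hx)) hlim
  exact pos_of_mul_pos_right (by linear_combination hN) hW.le

end Comparison

theorem exists_first_eq {f : ℝ → ℝ} {a b y : ℝ} (hab : a ≤ b) (hf : ContinuousOn f (Icc a b))
    (ha : f a < y) (hb : y ≤ f b) : ∃ r ∈ Ioc a b, f r = y ∧ ∀ x ∈ Ico a r, f x < y := by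
  have hcompact : IsCompact (Icc a b ∩ f ⁻¹' {y}) :=
    isCompact_Icc.of_isClosed_subset (hf.preimage_isClosed_of_isClosed isClosed_Icc
      isClosed_singleton) inter_subset_left
  obtain ⟨z, hz, hfz⟩ := intermediate_value_Icc hab hf ⟨ha.le, hb⟩
  obtain ⟨r, ⟨hr, hfr⟩, hmin⟩ := hcompact.exists_isLeast ⟨z, hz, hfz⟩
  have har : a < r := hr.1.lt_of_ne fun h ↦ ha.ne (h ▸ hfr)
  refine ⟨r, ⟨har, hr.2⟩, hfr, fun x hx ↦ ?_⟩
  by_contra! hyx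
  have hxb : x ≤ b := hx.2.le.trans hr.2
  obtain ⟨z, hz, hfz⟩ :=
    intermediate_value_Icc hx.1 (hf.mono (Icc_subset_Icc_right hxb)) ⟨ha.le, hyx⟩
  exact (hmin ⟨⟨hz.1, hz.2.trans hxb⟩, hfz⟩).not_gt (hz.2.trans_lt hx.2)

theorem convexOn_le_chord {s : Set ℝ} {f : ℝ → ℝ} (hf : ConvexOn ℝ s f) {e c y : ℝ}
    (he : e ∈ s) (hc : c ∈ s) (hey : e ≤ y) (hyc : y ≤ c) :
    f y ≤ f c + slope f c e * (y - c) := by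
  rcases hyc.eq_or_lt with rfl | hyc
  · simp
  have hy : y ∈ s := hf.1.ordConnected.out he hc ⟨hey, hyc.le⟩
  have hslope : slope f c e ≤ slope f c y :=
    hf.slope_mono hc ⟨he, (hey.trans_lt hyc).ne⟩ ⟨hy, hyc.ne⟩ hey
  have hfy : (y - c) * slope f c y = f y - f c := sub_smul_slope f c y
  linarith [mul_le_mul_of_nonpos_right hslope (sub_nonpos.2 hyc.le)]

section Interpolation

variable {A B R x : ℝ}

theorem interpolation_lt {D κ : ℝ} (hR : 0 < R) (hx : x ∈ Ioo 0 R) (hA : A * R ^ 2 < 6 * D)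
    (hB : B * R ^ 2 < 2 * D * (3 - κ * R ^ 2)) :
    A - (A - B) * (x / R) ^ 2 < 2 * (D / R ^ 2) * (3 - κ * x ^ 2) := by
  have hθ : 0 < (x / R) ^ 2 := pow_pos (div_pos hx.1 hR) 2
  have hθ1 : (x / R) ^ 2 < 1 :=
    pow_lt_one₀ (div_pos hx.1 hR).le ((div_lt_one hR).2 hx.2) two_ne_zero
  have hA' : A < 6 * D / R ^ 2 := (lt_div_iff₀ (by positivity)).2 hA
  have hB' : B < 2 * D * (3 - κ * R ^ 2) / R ^ 2 := (lt_div_iff₀ (by positivity)).2 hB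
  calc A - (A - B) * (x / R) ^ 2 = (1 - (x / R) ^ 2) * A + (x / R) ^ 2 * B := by ring
    _ < (1 - (x / R) ^ 2) * (6 * D / R ^ 2) +
        (x / R) ^ 2 * (2 * D * (3 - κ * R ^ 2) / R ^ 2) := by
      gcongr
    _ = 2 * (D / R ^ 2) * (3 - κ * x ^ 2) := by field_simp; ring

theorem interpolation_pos (hx : x ∈ Icc 0 R) (hA : 0 < A) (hB : 0 < B) :
    0 < A - (A - B) * (x / R) ^ 2 := by
  have hR : 0 ≤ R := hx.1.trans hx.2
  have hθ : 0 ≤ (x / R) ^ 2 := by positivity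
  have hθ1 : (x / R) ^ 2 ≤ 1 := pow_le_one₀ (div_nonneg hx.1 hR) (div_le_one_of_le₀ hx.2 hR)
  have hpos : 0 < (1 - (x / R) ^ 2) * A + (x / R) ^ 2 * B :=
    convex_Ioi (0 : ℝ) hA hB (sub_nonneg.2 hθ1) hθ (sub_add_cancel 1 _)
  linear_combination hpos

theorem slope_mul_parabola_eq {f : ℝ → ℝ} {c e : ℝ} (hec : e ≠ c) (hR : R ≠ 0) :
    slope f c e * ((c - e) / R ^ 2 * x ^ 2) = (f c - f e) * (x / R) ^ 2 := by
  have : e - c ≠ 0 := sub_ne_zero.2 hec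
  rw [slope_def_field]
  field_simp
  ring

end Interpolation

theorem hasDerivAt_parabola {L M k x : ℝ} :
    HasDerivAt (fun t ↦ L - M * (k * t ^ 2)) (-(2 * M * k) * x) x :=
  ((((hasDerivAt_pow 2 x).const_mul k).const_mul M).const_sub L).congr_deriv (by push_cast; ring)

theorem one_add_one_div_pow_lt_three {n : ℕ} : (1 + 1 / (n : ℝ)) ^ n < 3 := by
  have h := one_sub_div_pow_le_exp_neg (n := n) (t := -1) (by linarith [Nat.cast_nonneg (α := ℝ) n])
  rw [neg_neg, neg_div, sub_neg_eq_add] at h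
  exact h.trans_lt exp_one_lt_three

/-- The integrating factor of the profile operator: multiplied by
`radialWeight (α - 1)`, the expression `(1 - x²) v'' + (2 / x - (2 + 2 α) x) v'` becomes
`(radialWeight α * v')'`. -/
noncomputable def radialWeight (α x : ℝ) : ℝ := x ^ 2 * (1 - x ^ 2) ^ α

section RadialWeight

variable {α x : ℝ}

theorem radialWeight_pos (hx : x ∈ Ioo 0 1) : 0 < radialWeight α x := by
  have : 0 < 1 - x ^ 2 := by nlinarith [hx.1, hx.2]
  have := hx.1
  unfold radialWeight
  positivity

theorem hasDerivAt_radialWeight_mul {v : ℝ → ℝ} {v' : ℝ} (hx : x ∈ Ioo 0 1)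
    (hv : HasDerivAt v v' x) :
    HasDerivAt (fun t ↦ radialWeight α t * v t)
      (radialWeight (α - 1) x * ((1 - x ^ 2) * v' + (2 / x - (2 + 2 * α) * x) * v x)) x := by
  have hx0 : x ≠ 0 := hx.1.ne'
  have hpos : 0 < 1 - x ^ 2 := by nlinarith [hx.1, hx.2]
  have hsq : HasDerivAt (fun t : ℝ ↦ t ^ 2) (2 * x) x := by simpa using hasDerivAt_pow 2 x
  have hweight := hsq.mul ((hsq.const_sub 1).rpow_const (p := α) (.inl hpos.ne'))
  refine (hweight.mul hv).congr_deriv ?_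
  have hrpow : (1 - x ^ 2) ^ α = (1 - x ^ 2) ^ (α - 1) * (1 - x ^ 2) := by
    rw [rpow_sub_one hpos.ne']; field_simp
  unfold radialWeight
  simp only [Pi.mul_apply, hrpow]
  field_simp
  ring

theorem hasDerivAt_radialWeight_mul_const_mul {m : ℝ} (hx : x ∈ Ioo 0 1) :
    HasDerivAt (fun t ↦ radialWeight α t * (m * t))
      (radialWeight (α - 1) x * (m * (3 - (3 + 2 * α) * x ^ 2))) x := by
  have hx0 : x ≠ 0 := hx.1.ne'
  refine (hasDerivAt_radialWeight_mul hx (hasDerivAt_const_mul m)).congr_deriv ?_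
  field_simp
  ring

theorem hasDerivAt_radialWeight_mul_rpow (hx : x ∈ Ioo 0 1) :
    HasDerivAt (fun t ↦ radialWeight α t * (-α * t ^ (-α - 1)))
      (-(radialWeight (α - 1) x *
        ((α * (1 - α) / x ^ 2 - α * (α + 1)) * x ^ (-α)))) x := by
  have hx0 : x ≠ 0 := hx.1.ne'
  have hderiv : HasDerivAt (fun t ↦ -α * t ^ (-α - 1)) (-α * ((-α - 1) * x ^ (-α - 1 - 1))) x :=
    (hasDerivAt_rpow_const (.inl hx0)).const_mul _
  refine (hasDerivAt_radialWeight_mul hx hderiv).congr_deriv ?_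
  simp only [rpow_sub_one hx0]
  field_simp
  ring

theorem tendsto_radialWeight_mul_rpow {q : ℝ} (hq : 0 < 2 + q) :
    Tendsto (fun t ↦ radialWeight α t * t ^ q) (𝓝[>] 0) (𝓝 0) := by
  have hpow : Tendsto (fun t : ℝ ↦ t ^ (2 + q)) (𝓝[>] 0) (𝓝 0) := by
    simpa [zero_rpow hq.ne'] using
      (continuousAt_rpow_const 0 (2 + q) (.inr hq.le)).tendsto.mono_left nhdsWithin_le_nhds
  have hbase : Tendsto (fun t : ℝ ↦ (1 - t ^ 2) ^ α) (𝓝[>] 0) (𝓝 1) := by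
    have : ContinuousAt (fun t : ℝ ↦ (1 - t ^ 2) ^ α) 0 :=
      ContinuousAt.rpow_const (by fun_prop) (.inl (by norm_num))
    simpa using this.tendsto.mono_left nhdsWithin_le_nhds
  have hprod := hpow.mul hbase
  rw [zero_mul] at hprod
  refine hprod.congr' ?_
  filter_upwards [self_mem_nhdsWithin] with t ht
  have ht : (0 : ℝ) < t := ht
  rw [rpow_add ht, rpow_two, radialWeight]
  ring

theorem tendsto_radialWeight : Tendsto (radialWeight α) (𝓝[>] 0) (𝓝 0) := by
  simpa using tendsto_radialWeight_mul_rpow (α := α) (q := 0) (by norm_num)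

end RadialWeight

section Constants

variable {p : ℕ}

theorem alphaP_mul_sub_one (hp : 2 ≤ p) : alphaP p * ((p : ℝ) - 1) = 2 := by
  have : (2 : ℝ) ≤ p := by exact_mod_cast hp
  exact div_mul_cancel₀ 2 (by linarith)

theorem alphaP_pos (hp : 2 ≤ p) : 0 < alphaP p := by
  have : (2 : ℝ) ≤ p := by exact_mod_cast hp
  exact div_pos two_pos (by linarith)

theorem alphaP_lt_one (hp : 4 ≤ p) : alphaP p < 1 := by
  have : (4 : ℝ) ≤ p := by exact_mod_cast hp
  exact (div_lt_one (by linarith)).2 (by linarith)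

theorem rpow_one_div_sub_one_pow (hp : 2 ≤ p) {a : ℝ} (ha : 0 ≤ a) :
    (a ^ ((1 : ℝ) / ((p : ℝ) - 1))) ^ (p - 1) = a := by
  rw [one_div, ← Nat.cast_pred (by lia), rpow_inv_natCast_pow ha (by lia)]

theorem rpow_alphaP_pow (hp : 2 ≤ p) {x : ℝ} (hx : 0 ≤ x) : (x ^ alphaP p) ^ (p - 1) = x ^ 2 := by
  rw [← rpow_natCast, ← rpow_mul hx, Nat.cast_pred (by lia), alphaP_mul_sub_one hp, rpow_two]

theorem bZero_nonneg : 0 ≤ bZero p := by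
  unfold bZero
  positivity

theorem bZero_pow (hp : 2 ≤ p) : bZero p ^ (p - 1) = alphaP p * (alphaP p + 1) := by
  have : (2 : ℝ) ≤ p := by exact_mod_cast hp
  have : (p : ℝ) - 1 ≠ 0 := by linarith
  rw [bZero, rpow_one_div_sub_one_pow hp (by positivity), alphaP]
  field_simp
  ring

theorem bInfty_pos (hp : 4 ≤ p) : 0 < bInfty p := by
  have : (4 : ℝ) ≤ p := by exact_mod_cast hp
  exact rpow_pos_of_pos (div_pos (by linarith) (by nlinarith)) _

theorem bInfty_pow (hp : 3 ≤ p) : bInfty p ^ (p - 1) = alphaP p * (1 - alphaP p) := by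
  have : (3 : ℝ) ≤ p := by exact_mod_cast hp
  have : (p : ℝ) - 1 ≠ 0 := by linarith
  rw [bInfty, rpow_one_div_sub_one_pow (by lia)
    (div_nonneg (by linarith) (by positivity)), alphaP]
  field_simp
  ring

/-- The radius at which the singular solution `uInfty p` takes the value `e`. -/
noncomputable def crossingRadius (p : ℕ) (e : ℝ) : ℝ := (bInfty p / e) ^ (1 / alphaP p)

variable {e : ℝ}

theorem crossingRadius_pos (hp : 4 ≤ p) (he : 0 < e) : 0 < crossingRadius p e :=
  rpow_pos_of_pos (div_pos (bInfty_pos hp) he) _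

theorem crossingRadius_rpow_alphaP (hp : 4 ≤ p) (he : 0 < e) :
    crossingRadius p e ^ alphaP p = bInfty p / e := by
  rw [crossingRadius, ← rpow_mul (div_pos (bInfty_pos hp) he).le,
    one_div_mul_cancel (alphaP_pos (by lia)).ne', rpow_one]

theorem crossingRadius_sq_mul_pow (hp : 4 ≤ p) (he : 0 < e) :
    crossingRadius p e ^ 2 * e ^ (p - 1) = alphaP p * (1 - alphaP p) := by
  rw [← rpow_alphaP_pow (p := p) (by lia) (crossingRadius_pos hp he).le,
    crossingRadius_rpow_alphaP hp he, div_pow, div_mul_cancel₀ _ (pow_ne_zero _ he.ne'),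
    bInfty_pow (by lia)]

theorem one_add_alphaP_mul_crossingRadius_sq_lt (hp : 4 ≤ p) (he : bZero p < e) :
    (1 + alphaP p) * crossingRadius p e ^ 2 < 1 - alphaP p := by
  have hα : 0 < alphaP p := alphaP_pos (by lia)
  have he0 : 0 < e := bZero_nonneg.trans_lt he
  have hpow : alphaP p * (alphaP p + 1) < e ^ (p - 1) :=
    bZero_pow (p := p) (by lia) ▸ pow_lt_pow_left₀ he bZero_nonneg (by lia)
  have hR : 0 < crossingRadius p e ^ 2 := pow_pos (crossingRadius_pos hp he0) 2
  refine lt_of_mul_lt_mul_left ?_ hα.le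
  calc alphaP p * ((1 + alphaP p) * crossingRadius p e ^ 2)
      = crossingRadius p e ^ 2 * (alphaP p * (alphaP p + 1)) := by ring
    _ < crossingRadius p e ^ 2 * e ^ (p - 1) := by gcongr
    _ = alphaP p * (1 - alphaP p) := crossingRadius_sq_mul_pow hp he0

theorem crossingRadius_lt_one (hp : 4 ≤ p) (he : bZero p < e) : crossingRadius p e < 1 := by
  have hα : 0 < alphaP p := alphaP_pos (by lia)
  have h := one_add_alphaP_mul_crossingRadius_sq_lt hp he
  by_contra! hR
  nlinarith [one_le_pow₀ hR (n := 2)]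

end Constants

/-- The nonlinearity `u ^ p - α (α + 1) u` of the profile equation. -/
noncomputable def source (p : ℕ) (y : ℝ) : ℝ := y ^ p - alphaP p * (alphaP p + 1) * y

section Source

variable {p : ℕ} {y : ℝ}

theorem source_eq_mul (hp : p ≠ 0) :
    source p y = y * (y ^ (p - 1) - alphaP p * (alphaP p + 1)) := by
  rw [source, ← mul_pow_sub_one hp]
  ring

theorem source_eq_mul_sub_bZero_pow (hp : 2 ≤ p) :
    source p y = y * (y ^ (p - 1) - bZero p ^ (p - 1)) := by
  rw [source_eq_mul (by lia), bZero_pow hp]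

theorem source_pos (hp : 2 ≤ p) (hy : bZero p < y) : 0 < source p y := by
  rw [source_eq_mul_sub_bZero_pow hp]
  exact mul_pos (bZero_nonneg.trans_lt hy)
    (sub_pos.2 (pow_lt_pow_left₀ hy bZero_nonneg (by lia)))

theorem source_lt_source (hp : 2 ≤ p) {z : ℝ} (hy : bZero p < y) (hyz : y < z) :
    source p y < source p z := by
  have hy0 : 0 < y := bZero_nonneg.trans_lt hy
  rw [source_eq_mul_sub_bZero_pow hp, source_eq_mul_sub_bZero_pow hp]
  have hpow : bZero p ^ (p - 1) < y ^ (p - 1) := pow_lt_pow_left₀ hy bZero_nonneg (by lia)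
  have hyz_pow : y ^ (p - 1) < z ^ (p - 1) := pow_lt_pow_left₀ hyz hy0.le (by lia)
  exact mul_lt_mul'' hyz (by linarith) hy0.le (by linarith)

theorem source_lt_of_mul_rpow_lt {x : ℝ} (hp : 3 ≤ p) (hx : 0 < x) (hy : 0 < y)
    (hlt : y * x ^ alphaP p < bInfty p) :
    source p y <
      y * (alphaP p * (1 - alphaP p) / x ^ 2 - alphaP p * (alphaP p + 1)) := by
  rw [source_eq_mul (by lia)]
  gcongr
  rw [lt_div_iff₀ (by positivity), ← rpow_alphaP_pow (p := p) (by lia) hx.le, ← mul_pow,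
    ← bInfty_pow hp]
  exact pow_lt_pow_left₀ hlt (by positivity) (by lia)

theorem convexOn_source : ConvexOn ℝ (Ici 0) (source p) :=
  (convexOn_pow p).sub ((LinearMap.mulLeft ℝ (alphaP p * (alphaP p + 1))).concaveOn (convex_Ici 0))

theorem contDiff_source : ContDiff ℝ 1 (source p) := by
  unfold source
  fun_prop

end Source

section Barrier

variable {p : ℕ} {c e : ℝ}

-- The hypothesis `alphaP p * e = 2 * (c - e)` below is `e = (p - 1) / p * c` with `p` eliminated.

theorem source_mul_crossingRadius_sq_lt_left (hp : 4 ≤ p) (he : bZero p < e)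
    (hce : alphaP p * e = 2 * (c - e)) :
    source p e * crossingRadius p e ^ 2 <
      2 * (c - e) * (3 - (3 + 2 * alphaP p) * crossingRadius p e ^ 2) := by
  have hα : 0 < alphaP p := alphaP_pos (by lia)
  have he0 : 0 < e := bZero_nonneg.trans_lt he
  have hR : crossingRadius p e ^ 2 < 1 :=
    pow_lt_one₀ (crossingRadius_pos hp he0).le (crossingRadius_lt_one hp he) two_ne_zero
  calc source p e * crossingRadius p e ^ 2
      = e * (crossingRadius p e ^ 2 * e ^ (p - 1)) -
          alphaP p * e * ((alphaP p + 1) * crossingRadius p e ^ 2) := by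
        rw [source_eq_mul (by lia)]; ring
    _ = alphaP p * e * (1 - alphaP p - (1 + alphaP p) * crossingRadius p e ^ 2) := by
        rw [crossingRadius_sq_mul_pow hp he0]; ring
    _ < alphaP p * e * (3 - (3 + 2 * alphaP p) * crossingRadius p e ^ 2) := by
        gcongr ?_ * ?_
        nlinarith
    _ = 2 * (c - e) * (3 - (3 + 2 * alphaP p) * crossingRadius p e ^ 2) := by rw [hce]

theorem pow_lt_three_mul_pow (hp : 2 ≤ p) (he : 0 < e) (hce : alphaP p * e = 2 * (c - e)) :
    c ^ (p - 1) < 3 * e ^ (p - 1) := by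
  have hc : c = (1 + 1 / ((p - 1 : ℕ) : ℝ)) * e := by
    have : alphaP p = 2 * (1 / ((p - 1 : ℕ) : ℝ)) := by
      rw [Nat.cast_pred (by lia), alphaP]; ring
    rw [this] at hce
    linarith
  rw [hc, mul_pow]
  gcongr
  exact one_add_one_div_pow_lt_three

theorem source_mul_crossingRadius_sq_lt_right (hp : 4 ≤ p) (he : 0 < e)
    (hce : alphaP p * e = 2 * (c - e)) :
    source p c * crossingRadius p e ^ 2 < 6 * (c - e) := by
  have hα : 0 < alphaP p := alphaP_pos (by lia)
  have hc0 : 0 < c := by nlinarith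
  have hR : 0 < crossingRadius p e ^ 2 := pow_pos (crossingRadius_pos hp he) 2
  have hsource : source p c < c * (3 * e ^ (p - 1)) := by
    rw [source_eq_mul (by lia)]
    gcongr
    exact (sub_lt_self _ (by positivity)).trans (pow_lt_three_mul_pow (by lia) he hce)
  have hce' : c * (1 - alphaP p) ≤ e := by
    rw [show c = e * (1 + alphaP p / 2) by linarith]
    nlinarith [mul_pos hα he, mul_pos (mul_pos hα hα) he]
  calc source p c * crossingRadius p e ^ 2
      < c * (3 * e ^ (p - 1)) * crossingRadius p e ^ 2 := by gcongr
    _ = 3 * alphaP p * (c * (1 - alphaP p)) := by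
        linear_combination 3 * c * crossingRadius_sq_mul_pow hp he
    _ ≤ 3 * alphaP p * e := by gcongr
    _ = 6 * (c - e) := by linear_combination 3 * hce

theorem bZero_lt_of_div_lt (hp : 2 ≤ p) (hc : bZero p / (((p : ℝ) - 1) / p) < c) :
    bZero p < ((p : ℝ) - 1) / p * c := by
  have : (2 : ℝ) ≤ p := by exact_mod_cast hp
  rw [mul_comm]
  exact (div_lt_iff₀ (div_pos (by linarith) (by linarith))).1 hc

theorem alphaP_mul_eq (hp : 2 ≤ p) :
    alphaP p * (((p : ℝ) - 1) / p * c) = 2 * (c - ((p : ℝ) - 1) / p * c) := by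
  have : (p : ℝ) ≠ 0 := by positivity
  field_simp
  linear_combination c * alphaP_mul_sub_one hp

theorem lt_of_alphaP_mul_eq (hp : 2 ≤ p) (he : 0 < e) (hce : alphaP p * e = 2 * (c - e)) :
    e < c := by
  linarith [mul_pos (alphaP_pos hp) he]

theorem slope_source_pos (hp : 2 ≤ p) (he : bZero p < e) (hec : e < c) :
    0 < slope (source p) c e := by
  rw [slope_def_field]
  exact div_pos_of_neg_of_neg (sub_neg.2 (source_lt_source hp he hec)) (sub_neg.2 hec)

theorem chord_parabola_pos {x : ℝ} (hp : 4 ≤ p) (he : bZero p < e) (hec : e < c)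
    (hx : x ∈ Icc 0 (crossingRadius p e)) :
    0 < source p c - slope (source p) c e * ((c - e) / crossingRadius p e ^ 2 * x ^ 2) := by
  rw [slope_mul_parabola_eq hec.ne (crossingRadius_pos hp (bZero_nonneg.trans_lt he)).ne']
  exact interpolation_pos hx (source_pos (by lia) (he.trans hec)) (source_pos (by lia) he)

theorem chord_parabola_lt {x : ℝ} (hp : 4 ≤ p) (he : bZero p < e)
    (hce : alphaP p * e = 2 * (c - e)) (hx : x ∈ Ioo 0 (crossingRadius p e)) :
    source p c - slope (source p) c e * ((c - e) / crossingRadius p e ^ 2 * x ^ 2) <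
      2 * ((c - e) / crossingRadius p e ^ 2) * (3 - (3 + 2 * alphaP p) * x ^ 2) := by
  have he0 : 0 < e := bZero_nonneg.trans_lt he
  have hR0 : 0 < crossingRadius p e := crossingRadius_pos hp he0
  rw [slope_mul_parabola_eq (lt_of_alphaP_mul_eq (by lia) he0 hce).ne hR0.ne']
  exact interpolation_lt hR0 hx (source_mul_crossingRadius_sq_lt_right hp he0 hce)
    (source_mul_crossingRadius_sq_lt_left hp he hce)

end Barrier

/-- `u` is twice differentiable on `s` and solves the profile equation there. The
differentiability has to be asked for separately, because `ProfileEq` is stated with `deriv`,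
which vanishes where a derivative does not exist. -/
structure IsClassicalProfile (p : ℕ) (u : ℝ → ℝ) (s : Set ℝ) : Prop where
  differentiableAt : ∀ x ∈ s, DifferentiableAt ℝ u x
  differentiableAt_deriv : ∀ x ∈ s, DifferentiableAt ℝ (deriv u) x
  profileEq : ∀ x ∈ s, ProfileEq p u x

/-- The coefficient of `u'` once the profile equation is divided by `1 - x ^ 2`. -/
noncomputable def profileDrift (p : ℕ) (x : ℝ) : ℝ :=
  (2 / x - (2 + 2 * alphaP p) * x) / (1 - x ^ 2)

section Profile

variable {p : ℕ} {u : ℝ → ℝ} {r x : ℝ}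

theorem profileEq_iff_source :
    ProfileEq p u x ↔ (1 - x ^ 2) * deriv (deriv u) x
      + (2 / x - (2 + 2 * alphaP p) * x) * deriv u x + source p (u x) = 0 := by
  rw [ProfileEq, source, sub_add_eq_add_sub, add_sub_assoc]

theorem profileEq_iff_normalForm (hx : 1 - x ^ 2 ≠ 0) :
    ProfileEq p u x ↔
      deriv (deriv u) x + profileDrift p x * deriv u x + source p (u x) / (1 - x ^ 2) = 0 := by
  have hdiv : deriv (deriv u) x + profileDrift p x * deriv u x + source p (u x) / (1 - x ^ 2) =
      ((1 - x ^ 2) * deriv (deriv u) x + (2 / x - (2 + 2 * alphaP p) * x) * deriv u x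
        + source p (u x)) / (1 - x ^ 2) := by
    rw [profileDrift]
    field_simp
  rw [profileEq_iff_source, hdiv, div_eq_zero_iff, or_iff_left hx]

theorem contDiffOn_profileDrift : ContDiffOn ℝ 1 (profileDrift p) (Ioo 0 1) := by
  have hne : ∀ x ∈ Ioo (0 : ℝ) 1, 1 - x ^ 2 ≠ 0 := fun x hx ↦ by nlinarith [hx.1, hx.2]
  unfold profileDrift
  exact ((contDiffOn_const.div contDiffOn_id fun x hx ↦ hx.1.ne').sub
    (contDiffOn_const.mul contDiffOn_id)).div (by fun_prop) hne

theorem profileDrift_pos (hx : x ∈ Ioo 0 1) (hα : (1 + alphaP p) * x ^ 2 < 1) :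
    0 < profileDrift p x := by
  have hx0 : x ≠ 0 := hx.1.ne'
  have hnum : 2 / x - (2 + 2 * alphaP p) * x = 2 * (1 - (1 + alphaP p) * x ^ 2) / x := by
    field_simp
  rw [profileDrift, hnum]
  exact div_pos (div_pos (by linarith) hx.1) (by nlinarith [hx.1, hx.2])

theorem differentiableAt_of_profileEq (hu : ContinuousAt u x) (heq : ProfileEq p u x)
    (hne : source p (u x) ≠ 0) : DifferentiableAt ℝ u x := by
  by_contra hnd
  rw [profileEq_iff_source, deriv_zero_of_not_differentiableAt hnd, mul_zero, add_zero] at heq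
  refine hnd (differentiableAt_of_deriv_deriv_ne_zero hu fun h ↦ hne ?_)
  rwa [h, mul_zero, zero_add] at heq

theorem isClassicalProfile_of_source_ne_zero (hr : r ≤ 1)
    (hα : ∀ x ∈ Ioo 0 r, (1 + alphaP p) * x ^ 2 < 1) (hu : ContinuousOn u (Ioo 0 r))
    (heq : ∀ x ∈ Ioo 0 r, ProfileEq p u x) (hne : ∀ x ∈ Ioo 0 r, source p (u x) ≠ 0) :
    IsClassicalProfile p u (Ioo 0 r) := by
  have hsub : Ioo 0 r ⊆ Ioo 0 1 := Ioo_subset_Ioo_right hr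
  have hden : ∀ x ∈ Ioo 0 r, 1 - x ^ 2 ≠ 0 := fun x hx ↦ by
    nlinarith [(hsub hx).1, (hsub hx).2]
  have hdiff : ∀ x ∈ Ioo 0 r, DifferentiableAt ℝ u x := fun x hx ↦
    differentiableAt_of_profileEq (hu.continuousAt (isOpen_Ioo.mem_nhds hx)) (heq x hx) (hne x hx)
  have hdrift : ContDiffOn ℝ 1 (profileDrift p) (Ioo 0 r) := contDiffOn_profileDrift.mono hsub
  have hdrift0 : ∀ x ∈ Ioo 0 r, profileDrift p x ≠ 0 := fun x hx ↦
    (profileDrift_pos (hsub hx) (hα x hx)).ne'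
  have hnormal : ∀ x ∈ Ioo 0 r,
      deriv (deriv u) x + profileDrift p x * deriv u x + source p (u x) / (1 - x ^ 2) = 0 :=
    fun x hx ↦ (profileEq_iff_normalForm (hden x hx)).1 (heq x hx)
  have hderiv : ContinuousOn (deriv u) (Ioo 0 r) :=
    continuousOn_deriv_of_deriv_deriv_add_eq_zero hdrift hdrift0
      ((contDiff_source.continuous.comp_continuousOn hu).div (by fun_prop) hden) hdiff hnormal
  have hu1 : ContDiffOn ℝ 1 u (Ioo 0 r) :=
    contDiffOn_one_of_continuousOn_deriv isOpen_Ioo hdiff hderiv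
  exact ⟨hdiff, differentiableAt_deriv_of_deriv_deriv_add_eq_zero hdrift hdrift0
    ((contDiff_source.comp_contDiffOn hu1).div (by fun_prop) hden) hdiff hnormal, heq⟩

namespace IsClassicalProfile

theorem mono {s t : Set ℝ} (h : IsClassicalProfile p u t) (hst : s ⊆ t) :
    IsClassicalProfile p u s :=
  ⟨fun x hx ↦ h.1 x (hst hx), fun x hx ↦ h.2 x (hst hx), fun x hx ↦ h.3 x (hst hx)⟩

theorem hasDerivAt_flux {s : Set ℝ} (h : IsClassicalProfile p u s) (hxs : x ∈ s)
    (hx : x ∈ Ioo 0 1) :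
    HasDerivAt (fun t ↦ radialWeight (alphaP p) t * deriv u t)
      (-(radialWeight (alphaP p - 1) x * source p (u x))) x := by
  refine (hasDerivAt_radialWeight_mul hx (h.differentiableAt_deriv x hxs).hasDerivAt).congr_deriv ?_
  linear_combination radialWeight (alphaP p - 1) x * profileEq_iff_source.1 (h.profileEq x hxs)

theorem deriv_neg (h : IsClassicalProfile p u (Ioo 0 r)) (hr : r ≤ 1)
    (hpos : ∀ x ∈ Ioo 0 r, 0 < source p (u x)) (hlim : Tendsto (deriv u) (𝓝[>] 0) (𝓝 0))
    (hx : x ∈ Ioo 0 r) : deriv u x < 0 := by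
  have hmem : ∀ t ∈ Ioc 0 x, t ∈ Ioo 0 r := fun t ht ↦ ⟨ht.1, ht.2.trans_lt hx.2⟩
  have hmem1 : ∀ t ∈ Ioc 0 x, t ∈ Ioo 0 1 := fun t ht ↦ Ioo_subset_Ioo_right hr (hmem t ht)
  have hflux : 0 < -(radialWeight (alphaP p) x * deriv u x) :=
    pos_of_tendsto_zero_of_deriv_pos (N := fun t ↦ -(radialWeight (alphaP p) t * deriv u t))
      (N' := fun t ↦ radialWeight (alphaP p - 1) t * source p (u t)) hx.1
      (fun t ht ↦ (h.hasDerivAt_flux (hmem t ht) (hmem1 t ht)).neg.congr_deriv (neg_neg _))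
      (fun t ht ↦ mul_pos (radialWeight_pos (hmem1 t (Ioo_subset_Ioc_self ht)))
        (hpos t (hmem t (Ioo_subset_Ioc_self ht))))
      (by simpa using (tendsto_radialWeight.mul hlim).neg)
  exact neg_of_mul_neg_right (neg_pos.1 hflux) (radialWeight_pos (hmem1 x ⟨hx.1, le_rfl⟩)).le

theorem strictAntiOn (h : IsClassicalProfile p u (Ioo 0 r)) (hr : r ≤ 1)
    (hu : ContinuousOn u (Icc 0 r)) (hpos : ∀ x ∈ Ioo 0 r, 0 < source p (u x))
    (hlim : Tendsto (deriv u) (𝓝[>] 0) (𝓝 0)) : StrictAntiOn u (Icc 0 r) :=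
  strictAntiOn_of_deriv_neg (convex_Icc 0 r) hu fun _ hx ↦
    h.deriv_neg hr hpos hlim (interior_Icc (a := (0 : ℝ)) ▸ hx)

section Parabola

variable {L M k : ℝ}

theorem parabola_wronskian_pos (h : IsClassicalProfile p u (Ioc 0 x)) (hx : x ∈ Ioo 0 1)
    (hu : ContinuousWithinAt u (Ioi 0) 0) (hlim : Tendsto (deriv u) (𝓝[>] 0) (𝓝 0)) (hM : 0 < M)
    (hpos : ∀ t ∈ Ioo 0 x, 0 < source p (u t))
    (hchord : ∀ t ∈ Ioo 0 x, source p (u t) ≤ L + M * (u t - u 0))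
    (hΨ : ∀ t ∈ Ioo 0 x, 0 < L - M * (k * t ^ 2))
    (hk : ∀ t ∈ Ioo 0 x, L - M * (k * t ^ 2) < 2 * k * (3 - (3 + 2 * alphaP p) * t ^ 2)) :
    0 < M * deriv u x * (L - M * (k * x ^ 2)) -
      (L + M * (u x - u 0)) * (-(2 * M * k) * x) := by
  have hmem : ∀ t ∈ Ioc 0 x, t ∈ Ioo 0 1 := fun t ht ↦ ⟨ht.1, ht.2.trans_lt hx.2⟩
  refine wronskian_pos (W := radialWeight (alphaP p)) (Z := fun t ↦ L + M * (u t - u 0))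
    (Z' := fun t ↦ M * deriv u t) (Ψ := fun t ↦ L - M * (k * t ^ 2))
    (Ψ' := fun t ↦ -(2 * M * k) * t)
    (f := fun t ↦ M * (radialWeight (alphaP p - 1) t * source p (u t)))
    (g := fun t ↦ radialWeight (alphaP p - 1) t * (2 * M * k * (3 - (3 + 2 * alphaP p) * t ^ 2)))
    hx.1 (fun t ht ↦ ?_) (fun t _ ↦ hasDerivAt_parabola) (fun t ht ↦ ?_) (fun t ht ↦ ?_)
    (fun t ht ↦ ?_) ?_ (radialWeight_pos hx)
  · exact (((h.differentiableAt t ht).hasDerivAt.sub_const (u 0)).const_mul M).const_add L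
  · simpa only [mul_left_comm, mul_neg] using (h.hasDerivAt_flux ht (hmem t ht)).const_mul M
  · exact (hasDerivAt_radialWeight_mul_const_mul (hmem t ht)).congr_deriv (by ring)
  · have hweight : 0 < radialWeight (alphaP p - 1) t :=
      radialWeight_pos (hmem t (Ioo_subset_Ioc_self ht))
    calc M * (radialWeight (alphaP p - 1) t * source p (u t)) * (L - M * (k * t ^ 2))
        = radialWeight (alphaP p - 1) t * M * (source p (u t) * (L - M * (k * t ^ 2))) := by ring
      _ < radialWeight (alphaP p - 1) t * M *
          ((L + M * (u t - u 0)) * (2 * k * (3 - (3 + 2 * alphaP p) * t ^ 2))) := by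
        gcongr ?_ * ?_
        exact mul_lt_mul_of_le_of_lt_of_pos_of_nonneg (hchord t ht) (hk t ht) (hpos t ht)
          ((hΨ t ht).trans (hk t ht)).le
      _ = _ := by ring
  · have hid : Tendsto (fun t : ℝ ↦ t) (𝓝[>] 0) (𝓝 0) := nhdsWithin_le_nhds
    have hZ := (((hu.tendsto.sub_const (u 0)).const_mul M).const_add L)
    have hΨ := (((hid.pow 2).const_mul k).const_mul M).const_sub L
    simpa using ((tendsto_radialWeight.mul (hlim.const_mul M)).mul hΨ).sub
      (hZ.mul (tendsto_radialWeight.mul (hid.const_mul (-(2 * M * k)))))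

theorem parabola_lt (h : IsClassicalProfile p u (Ioo 0 r)) (hr0 : 0 < r)
    (hr : r ≤ 1) (hu : ContinuousOn u (Icc 0 r)) (hlim : Tendsto (deriv u) (𝓝[>] 0) (𝓝 0))
    (hM : 0 < M) (hpos : ∀ x ∈ Ioo 0 r, 0 < source p (u x))
    (hchord : ∀ x ∈ Ioo 0 r, source p (u x) ≤ L + M * (u x - u 0))
    (hΨ : ∀ x ∈ Icc 0 r, 0 < L - M * (k * x ^ 2))
    (hk : ∀ x ∈ Ioo 0 r, L - M * (k * x ^ 2) < 2 * k * (3 - (3 + 2 * alphaP p) * x ^ 2)) :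
    u 0 - k * r ^ 2 < u r := by
  have hu0 : ContinuousWithinAt u (Ioi 0) 0 :=
    (hu 0 (left_mem_Icc.2 hr0.le)).mono_of_mem_nhdsWithin (Icc_mem_nhdsGT hr0)
  have hmono : StrictMonoOn (fun x ↦ (L + M * (u x - u 0)) / (L - M * (k * x ^ 2))) (Icc 0 r) := by
    refine strictMonoOn_of_deriv_pos (convex_Icc 0 r) (.div (by fun_prop) (by fun_prop)
      fun x hx ↦ (hΨ x hx).ne') fun x hx ↦ ?_
    rw [interior_Icc] at hx
    have hsub : Ioo 0 x ⊆ Ioo 0 r := Ioo_subset_Ioo_right hx.2.le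
    have hZ' := (((h.differentiableAt x hx).hasDerivAt.sub_const (u 0)).const_mul M).const_add L
    have hΨx := hΨ x (Ioo_subset_Icc_self hx)
    rw [(hZ'.fun_div hasDerivAt_parabola hΨx.ne').deriv]
    refine div_pos ?_ (pow_pos hΨx 2)
    exact parabola_wronskian_pos (h.mono fun t ht ↦ ⟨ht.1, ht.2.trans_lt hx.2⟩)
      ⟨hx.1, hx.2.trans_le hr⟩ hu0 hlim hM (fun t ht ↦ hpos t (hsub ht))
      (fun t ht ↦ hchord t (hsub ht)) (fun t ht ↦ hΨ t (Ioo_subset_Icc_self (hsub ht)))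
      (fun t ht ↦ hk t (hsub ht))
  have hlt := hmono (left_mem_Icc.2 hr0.le) (right_mem_Icc.2 hr0.le) hr0
  have hL : 0 < L := by simpa using hΨ 0 (left_mem_Icc.2 hr0.le)
  simp only [sub_self, mul_zero, add_zero, ne_eq, OfNat.ofNat_ne_zero, not_false_eq_true, zero_pow,
    sub_zero, div_self hL.ne'] at hlt
  rw [one_lt_div (hΨ r (right_mem_Icc.2 hr0.le))] at hlt
  nlinarith

end Parabola

theorem singular_wronskian_pos (hp : 4 ≤ p) (h : IsClassicalProfile p u (Ioc 0 x))
    (hx : x ∈ Ioo 0 1) (hu : ContinuousWithinAt u (Ioi 0) 0)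
    (hlim : Tendsto (deriv u) (𝓝[>] 0) (𝓝 0)) (hpos : ∀ t ∈ Ioo 0 x, 0 < u t)
    (hlt : ∀ t ∈ Ioo 0 x, u t * t ^ alphaP p < bInfty p) :
    0 < deriv u x * x ^ (-alphaP p) - u x * (-alphaP p * x ^ (-alphaP p - 1)) := by
  have hα1 : alphaP p < 1 := alphaP_lt_one hp
  have hmem : ∀ t ∈ Ioc 0 x, t ∈ Ioo 0 1 := fun t ht ↦ ⟨ht.1, ht.2.trans_lt hx.2⟩
  refine wronskian_pos hx.1 (fun t ht ↦ (h.differentiableAt t ht).hasDerivAt)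
    (fun t ht ↦ hasDerivAt_rpow_const (.inl ht.1.ne'))
    (fun t ht ↦ h.hasDerivAt_flux ht (hmem t ht))
    (fun t ht ↦ hasDerivAt_radialWeight_mul_rpow (hmem t ht)) (fun t ht ↦ ?_) ?_
    (radialWeight_pos hx)
  · have hweight : 0 < radialWeight (alphaP p - 1) t * t ^ (-alphaP p) :=
      mul_pos (radialWeight_pos (hmem t (Ioo_subset_Ioc_self ht))) (rpow_pos_of_pos ht.1 _)
    have hsource := source_lt_of_mul_rpow_lt (by lia) ht.1 (hpos t ht) (hlt t ht)
    linear_combination mul_lt_mul_of_pos_left hsource hweight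
  · have hrpow := tendsto_radialWeight_mul_rpow (α := alphaP p) (q := -alphaP p) (by linarith)
    have hrpow' := tendsto_radialWeight_mul_rpow (α := alphaP p) (q := -alphaP p - 1)
      (by linarith)
    have hsum := (hlim.mul hrpow).add ((hu.tendsto.mul hrpow').const_mul (alphaP p))
    simp only [mul_zero, add_zero] at hsum
    exact hsum.congr fun t ↦ by ring

end IsClassicalProfile

end Profile

section Crossing

variable {p : ℕ} {u : ℝ → ℝ} {e r : ℝ}

theorem isClassicalProfile_of_lt (hp : 4 ≤ p) (he : bZero p < e)
    (hr : r ≤ crossingRadius p e) (hu : ContinuousOn u (Ioo 0 r))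
    (heq : ∀ x ∈ Ioo 0 r, ProfileEq p u x) (hlt : ∀ x ∈ Ioo 0 r, e < u x) :
    IsClassicalProfile p u (Ioo 0 r) := by
  have hα : 0 < alphaP p := alphaP_pos (by lia)
  refine isClassicalProfile_of_source_ne_zero (hr.trans (crossingRadius_lt_one hp he).le)
    (fun x hx ↦ ?_) hu heq fun x hx ↦ (source_pos (by lia) (he.trans (hlt x hx))).ne'
  have hxR : x ^ 2 ≤ crossingRadius p e ^ 2 := pow_le_pow_left₀ hx.1.le (hx.2.le.trans hr) 2
  nlinarith [one_add_alphaP_mul_crossingRadius_sq_lt hp he]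

theorem lt_right_of_forall_Ioo_lt (hp : 4 ≤ p) (he : bZero p < e)
    (hce : alphaP p * e = 2 * (u 0 - e)) (hr0 : 0 < r) (hr : r ≤ crossingRadius p e)
    (hu : ContinuousOn u (Icc 0 r)) (hlim : Tendsto (deriv u) (𝓝[>] 0) (𝓝 0))
    (heq : ∀ x ∈ Ioo 0 r, ProfileEq p u x) (hlt : ∀ x ∈ Ioo 0 r, e < u x) : e < u r := by
  set c := u 0
  have he0 : 0 < e := bZero_nonneg.trans_lt he
  have hec : e < c := lt_of_alphaP_mul_eq (by lia) he0 hce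
  have hR0 : 0 < crossingRadius p e := hr0.trans_le hr
  have hr1 : r ≤ 1 := hr.trans (crossingRadius_lt_one hp he).le
  have hpos : ∀ x ∈ Ioo 0 r, 0 < source p (u x) := fun x hx ↦
    source_pos (by lia) (he.trans (hlt x hx))
  have hprofile := isClassicalProfile_of_lt hp he hr (hu.mono Ioo_subset_Icc_self) heq hlt
  have hanti : StrictAntiOn u (Icc 0 r) := hprofile.strictAntiOn hr1 hu hpos hlim
  have hparabola := hprofile.parabola_lt hr0 hr1 hu hlim (slope_source_pos (by lia) he hec) hpos
    (fun x hx ↦ convexOn_le_chord convexOn_source he0.le (he0.trans hec).le (hlt x hx).le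
      (hanti (left_mem_Icc.2 hr0.le) (Ioo_subset_Icc_self hx) hx.1).le)
    (fun x hx ↦ chord_parabola_pos hp he hec ⟨hx.1, hx.2.trans hr⟩)
    (fun x hx ↦ chord_parabola_lt hp he hce ⟨hx.1, hx.2.trans_le hr⟩)
  have hrR : (c - e) / crossingRadius p e ^ 2 * r ^ 2 ≤ c - e := by
    rw [div_mul_eq_mul_div, div_le_iff₀ (by positivity)]
    gcongr
  linarith

theorem lt_of_mem_Icc_crossingRadius (hp : 4 ≤ p) (he : bZero p < e)
    (hce : alphaP p * e = 2 * (u 0 - e)) (hu : ContinuousOn u (Icc 0 (crossingRadius p e)))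
    (hlim : Tendsto (deriv u) (𝓝[>] 0) (𝓝 0))
    (heq : ∀ x ∈ Ioo 0 (crossingRadius p e), ProfileEq p u x) :
    ∀ x ∈ Icc 0 (crossingRadius p e), e < u x := by
  by_contra! ⟨x, hx, hxe⟩
  have he0 : 0 < e := bZero_nonneg.trans_lt he
  have hec : e < u 0 := lt_of_alphaP_mul_eq (by lia) he0 hce
  obtain ⟨r, hr, hur, hlt⟩ := exists_first_eq (f := fun t ↦ -u t) (y := -e) hx.1
    (hu.mono (Icc_subset_Icc_right hx.2)).neg (neg_lt_neg hec) (neg_le_neg hxe)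
  have hrR : r ≤ crossingRadius p e := hr.2.trans hx.2
  refine (lt_right_of_forall_Ioo_lt hp he hce hr.1 hrR (hu.mono (Icc_subset_Icc_right hrR)) hlim
    (fun t ht ↦ heq t ⟨ht.1, ht.2.trans_le hrR⟩)
    fun t ht ↦ neg_lt_neg_iff.1 (hlt t ⟨ht.1.le, ht.2⟩)).ne' (neg_inj.1 hur)

theorem exists_first_mul_rpow_eq (hp : 4 ≤ p) (he : 0 < e)
    (hu : ContinuousOn u (Icc 0 (crossingRadius p e))) (hlt : e < u (crossingRadius p e)) :
    ∃ ρ ∈ Ioo 0 (crossingRadius p e), u ρ * ρ ^ alphaP p = bInfty p ∧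
      ∀ x ∈ Ioo 0 ρ, u x * x ^ alphaP p < bInfty p := by
  have hα : 0 < alphaP p := alphaP_pos (by lia)
  have hR : bInfty p < u (crossingRadius p e) * crossingRadius p e ^ alphaP p := by
    rw [crossingRadius_rpow_alphaP hp he, ← mul_div_assoc, lt_div_iff₀ he, mul_comm]
    exact mul_lt_mul_of_pos_right hlt (bInfty_pos hp)
  obtain ⟨ρ, hρ, heq, hbelow⟩ := exists_first_eq (f := fun x ↦ u x * x ^ alphaP p)
    (crossingRadius_pos hp he).le (hu.mul (continuous_rpow_const hα.le).continuousOn)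
    (by simpa [zero_rpow hα.ne'] using bInfty_pos hp) hR.le
  have hρR : ρ ≠ crossingRadius p e := fun h ↦ hR.ne' (h ▸ heq)
  exact ⟨ρ, ⟨hρ.1, hρ.2.lt_of_ne hρR⟩, heq, fun x hx ↦ hbelow x ⟨hx.1.le, hx.2⟩⟩

theorem exists_crossing_wronskian_pos (hp : 4 ≤ p) (he : bZero p < e)
    (hce : alphaP p * e = 2 * (u 0 - e)) (hu : ContinuousOn u (Icc 0 (crossingRadius p e)))
    (hlim : Tendsto (deriv u) (𝓝[>] 0) (𝓝 0))
    (heq : ∀ x ∈ Ioo 0 (crossingRadius p e), ProfileEq p u x) :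
    ∃ ρ ∈ Ioo 0 (crossingRadius p e), DifferentiableAt ℝ u ρ ∧
      u ρ * ρ ^ alphaP p = bInfty p ∧ deriv u ρ < 0 ∧
      0 < deriv u ρ * ρ ^ (-alphaP p) - u ρ * (-alphaP p * ρ ^ (-alphaP p - 1)) := by
  have he0 : 0 < e := bZero_nonneg.trans_lt he
  have hR0 : 0 < crossingRadius p e := crossingRadius_pos hp he0
  have hR1 : crossingRadius p e < 1 := crossingRadius_lt_one hp he
  have hlt := lt_of_mem_Icc_crossingRadius hp he hce hu hlim heq
  have hprofile := isClassicalProfile_of_lt hp he le_rfl (hu.mono Ioo_subset_Icc_self) heq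
    fun x hx ↦ hlt x (Ioo_subset_Icc_self hx)
  obtain ⟨ρ, hρ, hcross, hbelow⟩ :=
    exists_first_mul_rpow_eq hp he0 hu (hlt _ (right_mem_Icc.2 hR0.le))
  refine ⟨ρ, hρ, hprofile.differentiableAt ρ hρ, hcross, ?_, ?_⟩
  · exact hprofile.deriv_neg hR1.le
      (fun x hx ↦ source_pos (by lia) (he.trans (hlt x (Ioo_subset_Icc_self hx)))) hlim hρ
  · exact (hprofile.mono fun x hx ↦ ⟨hx.1, hx.2.trans_lt hρ.2⟩).singular_wronskian_pos hp
      ⟨hρ.1, hρ.2.trans hR1⟩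
      ((hu 0 (left_mem_Icc.2 hR0.le)).mono_of_mem_nhdsWithin (Icc_mem_nhdsGT hR0)) hlim
      (fun x hx ↦ he0.trans (hlt x ⟨hx.1.le, hx.2.le.trans hρ.2.le⟩)) hbelow

theorem hasDerivAt_div_uInfty_sub_one {u' ρ : ℝ} (hp : 4 ≤ p) (hρ : 0 < ρ)
    (hu : HasDerivAt u u' ρ) :
    HasDerivAt (fun x ↦ u x / uInfty p x - 1)
      ((u' * ρ ^ (-alphaP p) - u ρ * (-alphaP p * ρ ^ (-alphaP p - 1))) /
        (bInfty p * (ρ ^ (-alphaP p)) ^ 2)) ρ := by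
  have hb : bInfty p ≠ 0 := (bInfty_pos hp).ne'
  have hs : ρ ^ (-alphaP p) ≠ 0 := (rpow_pos_of_pos hρ _).ne'
  have hsing : HasDerivAt (uInfty p) (bInfty p * (-alphaP p * ρ ^ (-alphaP p - 1))) ρ :=
    (hasDerivAt_rpow_const (.inl hρ.ne')).const_mul _
  refine ((hu.div hsing (mul_ne_zero hb hs)).sub_const 1).congr_deriv ?_
  rw [uInfty]
  field_simp

theorem div_uInfty_sub_one_eq_zero {ρ : ℝ} (hp : 4 ≤ p) (hρ : 0 < ρ)
    (hcross : u ρ * ρ ^ alphaP p = bInfty p) : u ρ / uInfty p ρ - 1 = 0 := by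
  have hb : bInfty p ≠ 0 := (bInfty_pos hp).ne'
  rw [uInfty, rpow_neg hρ.le, ← div_eq_mul_inv, div_div_eq_mul_div, hcross, div_self hb, sub_self]

theorem mul_deriv_div_uInfty_pos {ρ : ℝ} (hp : 4 ≤ p) (hρ : 0 < ρ)
    (hu : DifferentiableAt ℝ u ρ)
    (hwronskian : 0 < deriv u ρ * ρ ^ (-alphaP p) - u ρ * (-alphaP p * ρ ^ (-alphaP p - 1))) :
    0 < ρ * deriv (fun x ↦ u x / uInfty p x - 1) ρ := by
  rw [(hasDerivAt_div_uInfty_sub_one hp hρ hu.hasDerivAt).deriv]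
  have hb : 0 < bInfty p := bInfty_pos hp
  positivity

theorem mul_deriv_div_uInfty_lt {ρ : ℝ} (hp : 4 ≤ p) (hρ : 0 < ρ)
    (hu : DifferentiableAt ℝ u ρ) (hcross : u ρ * ρ ^ alphaP p = bInfty p)
    (hderiv : deriv u ρ < 0) :
    ρ * deriv (fun x ↦ u x / uInfty p x - 1) ρ < alphaP p := by
  have hb : 0 < bInfty p := bInfty_pos hp
  have hs : 0 < ρ ^ alphaP p := rpow_pos_of_pos hρ _
  have hsplit : ρ * deriv (fun x ↦ u x / uInfty p x - 1) ρ =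
      alphaP p + ρ * deriv u ρ * ρ ^ alphaP p / bInfty p := by
    rw [(hasDerivAt_div_uInfty_sub_one hp hρ hu.hasDerivAt).deriv, rpow_sub_one hρ.ne',
      rpow_neg hρ.le]
    field_simp
    linear_combination alphaP p * hcross
  rw [hsplit, add_lt_iff_neg_left]
  exact div_neg_of_neg_of_pos (mul_neg_of_neg_of_pos (mul_neg_of_pos_of_neg hρ hderiv) hs) hb

end Crossing

theorem first_crossing_general (p : ℕ) (hp : 4 ≤ p)
    (c : ℝ) (hc : bZero p / (((p : ℝ) - 1) / p) < c)
    (u : ℝ → ℝ) (hcont : ContinuousOn u (Ico 0 1)) (hu0 : u 0 = c)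
    (hd0 : Tendsto (deriv u) (𝓝[>] 0) (𝓝 0))
    (heq : ∀ ρ ∈ Ioo (0 : ℝ) 1, ProfileEq p u ρ) :
    ∃ ρ₁ : ℝ, 0 < ρ₁ ∧
      ρ₁ < (bInfty p / ((((p : ℝ) - 1) / p) * c)) ^ (1 / alphaP p) ∧
      (fun ρ => u ρ / uInfty p ρ - 1) ρ₁ = 0 ∧
      0 < ρ₁ * deriv (fun ρ => u ρ / uInfty p ρ - 1) ρ₁ ∧
      ρ₁ * deriv (fun ρ => u ρ / uInfty p ρ - 1) ρ₁ < alphaP p := by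
  set e := ((p : ℝ) - 1) / p * c
  obtain ⟨he, hce⟩ : bZero p < e ∧ alphaP p * e = 2 * (u 0 - e) :=
    hu0 ▸ ⟨bZero_lt_of_div_lt (by lia) hc, alphaP_mul_eq (by lia)⟩
  have hR : crossingRadius p e < 1 := crossingRadius_lt_one hp he
  obtain ⟨ρ, hρ, hdiff, hcross, hderiv, hwronskian⟩ := exists_crossing_wronskian_pos hp he hce
    (hcont.mono fun x hx ↦ ⟨hx.1, hx.2.trans_lt hR⟩) hd0
    (fun x hx ↦ heq x ⟨hx.1, hx.2.trans hR⟩)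
  exact ⟨ρ, hρ.1, hρ.2, div_uInfty_sub_one_eq_zero hp hρ.1 hcross,
    mul_deriv_div_uInfty_pos hp hρ.1 hdiff hwronskian,
    mul_deriv_div_uInfty_lt hp hρ.1 hdiff hcross hderiv⟩

/-- **Lemma 1.** With `d = (p-1)/p` and `c > b₀/d`, a solution regular at
`ρ = 0` with `u(0) = c`, `u'(0) = 0` has a first crossing `ρ₁ < (b∞/(dc))^(1/α)` of the
singular solution, where `w(ρ₁) = 0` and `0 < ρ₁ w'(ρ₁) < α` for `w = u/u∞ - 1`. -/
theorem first_crossing (p : ℕ) (hp_odd : Odd p) (hp : 7 ≤ p)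
    (c : ℝ) (hc : bZero p / (((p : ℝ) - 1) / p) < c)
    (u : ℝ → ℝ) (hcont : ContinuousOn u (Icc 0 1))
    (hu : AnalyticAt ℝ u 0) (hu0 : u 0 = c) (hd0 : deriv u 0 = 0)
    (heq : ∀ ρ ∈ Ioo (0 : ℝ) 1, ProfileEq p u ρ) :
    ∃ ρ₁ : ℝ, 0 < ρ₁ ∧
      ρ₁ < (bInfty p / ((((p : ℝ) - 1) / p) * c)) ^ (1 / alphaP p) ∧
      (fun ρ => u ρ / uInfty p ρ - 1) ρ₁ = 0 ∧
      0 < ρ₁ * deriv (fun ρ => u ρ / uInfty p ρ - 1) ρ₁ ∧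
      ρ₁ * deriv (fun ρ => u ρ / uInfty p ρ - 1) ρ₁ < alphaP p := by
  exact first_crossing_general p (by lia) c hc u (hcont.mono Ico_subset_Icc_self) hu0
    (by simpa only [hd0] using hu.deriv.continuousAt.tendsto.mono_left nhdsWithin_le_nhds) heq
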